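/- Let Δ₃ be the convex hull of {(0,3),(3,0),(−3,−3)} in ℝ² and let k ≥ 1 be an integer. For every W₃-invariant function g ∈ PL(Δ₃;k) one has (1/vol(kΔ₃))·∫_{kΔ₃} g dA ≥ (1/|kΔ₃ ∩ ℤ²|)·Σ_{x ∈ kΔ₃ ∩ ℤ²} g(x), with equality if and only if g is affine on kΔ₃. -/

import Mathlib

open MeasureTheory Pointwise

noncomputable section

/-- The lattice points of `ℝ²`: points with integer coordinates. -/
def lat : Set (ℝ × ℝ) := {x | ∃ m n : ℤ, x = ((m : ℝ), (n : ℝ))}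

/-- `g` belongs to `PL(Δ;k)` (with `D = kΔ`): there is `φ` on the lattice points of `D`
such that `g x` is the height of the upper boundary of the convex hull of the subgraphs. -/
def IsPL (D : Set (ℝ × ℝ)) (g : ℝ × ℝ → ℝ) : Prop :=
  ∃ φ : ℝ × ℝ → ℝ, ∀ x ∈ D,
    g x = sSup {t : ℝ |
      (x, t) ∈ convexHull ℝ {p : (ℝ × ℝ) × ℝ | p.1 ∈ D ∩ lat ∧ p.2 ≤ φ p.1}}

/-- `g` is affine on `D`: restriction of a linear map plus a constant. -/
def IsAffineOn (D : Set (ℝ × ℝ)) (g : ℝ × ℝ → ℝ) : Prop :=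
  ∃ (l : (ℝ × ℝ) →ₗ[ℝ] ℝ) (c : ℝ), ∀ x ∈ D, g x = l x + c

/-- The moment polytope of the cubic surface `X₃`. -/
def Δ₃ : Set (ℝ × ℝ) := convexHull ℝ {((0 : ℝ), (3 : ℝ)), (3, 0), (-3, -3)}

/-- The generator `[[0,-1],[1,-1]]` of the Weyl group `W₃`, acting on `ℝ²`. -/
def σ₃ : ℝ × ℝ → ℝ × ℝ := fun p => (-p.2, p.1 - p.2)

/-- The swap `[[0,1],[1,0]]`, the second generator of `W₃`. -/
def sw : ℝ × ℝ → ℝ × ℝ := fun p => (p.2, p.1)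

/-!
Let `n = 3k` and `F = g 0 - g`. Then `F` is convex and invariant, vanishes at the fixed point `0` of
the group, hence is nonnegative, and the rotation `σ₃` reduces everything to the corner triangle
`x, y ≥ 0`, `x + y ≤ n`. The trapezoid rule on the unimodular triangulation of this triangle bounds
`∫ F` by a lattice sum that gives less weight to the outermost layer `x + y = n` than to the
layers `x + y = j < n`. On the latter, Jensen's inequality between `0` and the outermost layer
bounds `F` by `j / n` times values on the outermost layer. Counting how often each outer value is
used gives `N * ∫ F + F (n, 0) / 2 ≤ V * ∑ F`, where `V` is the area and `N` the number of lattice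
points. In the case of equality the maximum `F (n, 0)` of `F` is therefore `0`.
-/

section General

lemma setIntegral_le_sum_of_subset_biUnion {α ι : Type*} [MeasurableSpace α] {μ : Measure α}
    {I : Finset ι} {s : Set α} {T : ι → Set α} {f : α → ℝ} (hs : s ⊆ ⋃ i ∈ I, T i)
    (hmeas : ∀ i ∈ I, MeasurableSet (T i)) (hint : ∀ i ∈ I, IntegrableOn f (T i) μ)
    (hf : ∀ i ∈ I, ∀ x ∈ T i, 0 ≤ f x) :
    ∫ x in s, f x ∂μ ≤ ∑ i ∈ I, ∫ x in T i, f x ∂μ := by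
  have hle : μ.restrict s ≤ ∑ i ∈ I, μ.restrict (T i) := calc
    μ.restrict s ≤ μ.restrict (⋃ i ∈ (I : Set ι), T i) := Measure.restrict_mono hs le_rfl
    _ ≤ Measure.sum fun i : (I : Set ι) => μ.restrict (T i) :=
      Measure.restrict_biUnion_le I.countable_toSet
    _ = ∑ i ∈ I, μ.restrict (T i) := by
      rw [Measure.sum_fintype]
      exact Finset.sum_coe_sort I fun i => μ.restrict (T i)
  have hnonneg : 0 ≤ᵐ[∑ i ∈ I, μ.restrict (T i)] f := by
    rw [Filter.EventuallyLE, ae_finsetSum_measure_iff]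
    exact fun i hi => (ae_restrict_iff' (hmeas i hi)).2 (.of_forall (hf i hi))
  rw [← integral_finsetSum_measure hint]
  exact integral_mono_measure hle hnonneg (integrable_finsetSum_measure.2 hint)

lemma integrableOn_of_convexOn_of_bounded {E : Type*} [NormedAddCommGroup E] [NormedSpace ℝ E]
    [FiniteDimensional ℝ E] [MeasurableSpace E] [BorelSpace E] {μ : Measure E}
    [μ.IsAddHaarMeasure] {s : Set E} {f : E → ℝ} {C : ℝ} (hf : ConvexOn ℝ s f)
    (hs : μ s < ⊤) (hC : ∀ x ∈ s, |f x| ≤ C) : IntegrableOn f s μ := by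
  have hae : (interior s : Set E) =ᵐ[μ] s :=
    interior_ae_eq_of_null_frontier (hf.1.addHaar_frontier μ)
  refine IntegrableOn.congr_set_ae ?_ hae.symm
  refine ⟨hf.continuousOn_interior.aestronglyMeasurable isOpen_interior.measurableSet,
    .restrict_of_bounded (C := C) ((measure_mono interior_subset).trans_lt hs) ?_⟩
  exact (ae_restrict_iff' isOpen_interior.measurableSet).2
    (.of_forall fun x hx => hC x (interior_subset hx))

lemma concaveOn_sSup_fiber {E : Type*} [AddCommGroup E] [Module ℝ E] {C : Set (E × ℝ)}
    {s : Set E} (hC : Convex ℝ C) (hs : Convex ℝ s)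
    (hne : ∀ x ∈ s, {t : ℝ | (x, t) ∈ C}.Nonempty)
    (hbdd : ∀ x ∈ s, BddAbove {t : ℝ | (x, t) ∈ C}) :
    ConcaveOn ℝ s fun x => sSup {t : ℝ | (x, t) ∈ C} := by
  refine ⟨hs, fun x hx y hy a b ha hb hab => ?_⟩
  set X := {t : ℝ | (x, t) ∈ C}
  set Y := {t : ℝ | (y, t) ∈ C}
  have hsub : a • X + b • Y ⊆ {t : ℝ | (a • x + b • y, t) ∈ C} := by
    rintro _ ⟨_, ⟨t, ht, rfl⟩, _, ⟨u, hu, rfl⟩, rfl⟩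
    exact hC ht hu ha hb hab
  calc a • sSup X + b • sSup Y = sSup (a • X + b • Y) := by
        rw [← Real.sSup_smul_of_nonneg ha, ← Real.sSup_smul_of_nonneg hb,
          csSup_add (hne x hx).smul_set ((hbdd x hx).smul_of_nonneg ha)
            (hne y hy).smul_set ((hbdd y hy).smul_of_nonneg hb)]
    _ ≤ sSup {t : ℝ | (a • x + b • y, t) ∈ C} :=
        csSup_le_csSup (hbdd _ (hs hx hy ha hb hab))
          ((hne x hx).smul_set.add (hne y hy).smul_set) hsub

lemma sum_range_natCast {K : Type*} [Field K] [CharZero K] (n : ℕ) :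
    ∑ i ∈ Finset.range n, (i : K) = n * (n - 1) / 2 := by
  induction n with
  | zero => simp
  | succ n ih =>
    rw [Finset.sum_range_succ, ih]
    push_cast
    ring

lemma finsum_mem_const_eq_ncard_nsmul {α M : Type*} [AddCommMonoid M] {s : Set α}
    (hs : s.Finite) (c : M) : ∑ᶠ _ ∈ s, c = s.ncard • c := by
  rw [finsum_mem_eq_finite_toFinset_sum _ hs, Finset.sum_const, Set.ncard_eq_toFinset_card s hs]

lemma map_three_le_of_convexOn {E : Type*} [AddCommGroup E] [Module ℝ E] {s : Set E}
    {f : E → ℝ} (hf : ConvexOn ℝ s f) {x y z : E} (hx : x ∈ s) (hy : y ∈ s) (hz : z ∈ s)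
    {a b c : ℝ} (ha : 0 ≤ a) (hb : 0 ≤ b) (hc : 0 ≤ c) (habc : a + b + c = 1) :
    f (a • x + b • y + c • z) ≤ a * f x + b * f y + c * f z := by
  have := hf.map_sum_le (t := Finset.univ) (w := ![a, b, c]) (p := ![x, y, z])
    (by intro i _; fin_cases i <;> simpa) (by simpa [Fin.sum_univ_three] using habc)
    (by intro i _; fin_cases i <;> simpa)
  simpa [Fin.sum_univ_three] using this

end General

lemma IsPL.concaveOn {D : Set (ℝ × ℝ)} {g : ℝ × ℝ → ℝ} (hg : IsPL D g) (hD : Convex ℝ D)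
    (hfin : (D ∩ lat).Finite) (hhull : D ⊆ convexHull ℝ (D ∩ lat)) : ConcaveOn ℝ D g := by
  obtain ⟨φ, hφ⟩ := hg
  set P : Set ((ℝ × ℝ) × ℝ) := {p | p.1 ∈ D ∩ lat ∧ p.2 ≤ φ p.1}
  have hproj : Prod.fst '' P = D ∩ lat :=
    Set.Subset.antisymm (by rintro _ ⟨p, hp, rfl⟩; exact hp.1)
      fun x hx => ⟨(x, φ x), ⟨hx, le_rfl⟩, rfl⟩
  have hne (x) (hx : x ∈ D) : {t : ℝ | (x, t) ∈ convexHull ℝ P}.Nonempty := by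
    have hx' := hhull hx
    rw [← hproj, ← (IsLinearMap.mk Prod.fst_add Prod.smul_fst).image_convexHull] at hx'
    obtain ⟨⟨_, t⟩, ht, rfl⟩ := hx'
    exact ⟨t, ht⟩
  obtain ⟨M, hM⟩ := (hfin.image φ).bddAbove
  have hbelow : convexHull ℝ P ⊆ {p | p.2 ≤ M} :=
    convexHull_min (fun p hp => hp.2.trans (hM ⟨p.1, hp.1, rfl⟩))
      (convex_halfSpace_le (IsLinearMap.mk Prod.snd_add Prod.smul_snd) M)
  exact (concaveOn_sSup_fiber (convex_convexHull ℝ P) hD hne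
    fun x _ => ⟨M, fun t ht => hbelow ht⟩).congr fun x hx => (hφ x hx).symm

/-- The right triangle with vertices `(0, 0)`, `(r, 0)`, `(0, r)`. For `r = 1` it is the lower half
of a unit square; for `r = n` it is a fundamental domain for the rotation `σ₃` acting on
`momentTriangle n`. -/
def cornerTriangle (r : ℝ) : Set (ℝ × ℝ) := {p | 0 ≤ p.1 ∧ 0 ≤ p.2 ∧ p.1 + p.2 ≤ r}

section CornerTriangle

variable {r : ℝ} {f : ℝ × ℝ → ℝ}

lemma isCompact_cornerTriangle : IsCompact (cornerTriangle r) := by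
  have hclosed : IsClosed (cornerTriangle r) :=
    (isClosed_le continuous_const continuous_fst).inter <|
      (isClosed_le continuous_const continuous_snd).inter <|
        isClosed_le (continuous_fst.add continuous_snd) continuous_const
  refine (isCompact_Icc (a := ((0 : ℝ), (0 : ℝ))) (b := (r, r))).of_isClosed_subset hclosed ?_
  rintro ⟨x, y⟩ ⟨hx, hy, hxy⟩
  exact ⟨⟨hx, hy⟩, ⟨by linarith, by linarith⟩⟩

lemma measurableSet_cornerTriangle : MeasurableSet (cornerTriangle r) :=
  isCompact_cornerTriangle.measurableSet

lemma convex_cornerTriangle : Convex ℝ (cornerTriangle r) :=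
  (convex_halfSpace_ge (LinearMap.fst ℝ ℝ ℝ).isLinear 0).inter <|
    (convex_halfSpace_ge (LinearMap.snd ℝ ℝ ℝ).isLinear 0).inter <|
      convex_halfSpace_le (LinearMap.fst ℝ ℝ ℝ + LinearMap.snd ℝ ℝ ℝ).isLinear r

lemma setIntegral_cornerTriangle (hr : 0 ≤ r) (hf : IntegrableOn f (cornerTriangle r)) :
    ∫ p in cornerTriangle r, f p = ∫ x in 0..r, ∫ y in 0..(r - x), f (x, y) := by
  have hslice (x : ℝ) : ∫ y, (cornerTriangle r).indicator f (x, y) =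
      (Set.Icc 0 r).indicator (fun x => ∫ y in 0..(r - x), f (x, y)) x := by
    by_cases hx : x ∈ Set.Icc 0 r
    · have hfun : (fun y => (cornerTriangle r).indicator f (x, y)) =
          (Set.Icc 0 (r - x)).indicator fun y => f (x, y) := by
        funext y
        simp only [Set.indicator_apply, cornerTriangle, Set.mem_ofPred_eq, hx.1, Set.mem_Icc,
          true_and, le_sub_iff_add_le']
      rw [hfun, Set.indicator_of_mem hx, integral_indicator measurableSet_Icc,
        integral_Icc_eq_integral_Ioc, intervalIntegral.integral_of_le (sub_nonneg.2 hx.2)]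
    · have hfun : (fun y => (cornerTriangle r).indicator f (x, y)) = 0 := by
        funext y
        refine Set.indicator_of_notMem (fun h => hx ⟨h.1, ?_⟩) f
        linarith [h.2.1, h.2.2]
      rw [hfun, Set.indicator_of_notMem hx, integral_zero']
  rw [← integral_indicator measurableSet_cornerTriangle, Measure.volume_eq_prod,
    integral_prod _ ((integrable_indicator_iff measurableSet_cornerTriangle).2 hf)]
  simp only [hslice]
  rw [integral_indicator measurableSet_Icc, integral_Icc_eq_integral_Ioc,
    intervalIntegral.integral_of_le hr]

lemma setIntegral_affine_cornerTriangle (a b c : ℝ) (hr : 0 ≤ r) :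
    ∫ p in cornerTriangle r, (a + b * p.1 + c * p.2) = a * r ^ 2 / 2 + (b + c) * r ^ 3 / 6 := by
  rw [setIntegral_cornerTriangle hr
    (ContinuousOn.integrableOn_compact isCompact_cornerTriangle (by fun_prop))]
  have hinner (x : ℝ) : ∫ y in 0..(r - x), (a + b * x + c * y) =
      (a * r + c * r ^ 2 / 2) + (b * r - a - c * r) * x + (c / 2 - b) * x ^ 2 := by
    rw [intervalIntegral.integral_add (by simp) (Continuous.intervalIntegrable (by fun_prop) _ _),
      intervalIntegral.integral_const_mul, integral_id, intervalIntegral.integral_const,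
      smul_eq_mul]
    ring
  simp only [hinner]
  rw [intervalIntegral.integral_add (Continuous.intervalIntegrable (by fun_prop) _ _)
      (Continuous.intervalIntegrable (by fun_prop) _ _),
    intervalIntegral.integral_add (by simp) (Continuous.intervalIntegrable (by fun_prop) _ _),
    intervalIntegral.integral_const_mul, intervalIntegral.integral_const_mul, integral_id,
    integral_pow, intervalIntegral.integral_const, smul_eq_mul]
  ring

lemma volume_cornerTriangle (hr : 0 ≤ r) : volume.real (cornerTriangle r) = r ^ 2 / 2 := by
  simpa using setIntegral_affine_cornerTriangle 1 0 0 hr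

lemma hermiteHadamard_cornerTriangle_one (hf : ConvexOn ℝ (cornerTriangle 1) f)
    (hint : IntegrableOn f (cornerTriangle 1)) :
    ∫ p in cornerTriangle 1, f p ≤ (f (0, 0) + f (1, 0) + f (0, 1)) / 6 := by
  set a := f (0, 0)
  set b := f (1, 0)
  set c := f (0, 1)
  have hle (p : ℝ × ℝ) (hp : p ∈ cornerTriangle 1) :
      f p ≤ a + (b - a) * p.1 + (c - a) * p.2 := by
    obtain ⟨hp1, hp2, hp12⟩ := hp
    have h := map_three_le_of_convexOn hf (x := (0, 0)) (y := (1, 0)) (z := (0, 1))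
      (by norm_num [cornerTriangle]) (by norm_num [cornerTriangle]) (by norm_num [cornerTriangle])
      (show 0 ≤ 1 - p.1 - p.2 by linarith) hp1 hp2 (by ring)
    simp only [Prod.smul_mk, smul_eq_mul, Prod.mk_add_mk, mul_zero, mul_one, zero_add, add_zero,
      Prod.mk.eta] at h
    linarith
  calc ∫ p in cornerTriangle 1, f p
      ≤ ∫ p in cornerTriangle 1, (a + (b - a) * p.1 + (c - a) * p.2) :=
        setIntegral_mono_on hint
          (ContinuousOn.integrableOn_compact isCompact_cornerTriangle (by fun_prop))
          measurableSet_cornerTriangle hle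
    _ = (a + b + c) / 6 := by
        rw [setIntegral_affine_cornerTriangle _ _ _ zero_le_one]
        ring

lemma hermiteHadamard_image_cornerTriangle_one {s : Set (ℝ × ℝ)} (e : (ℝ × ℝ) ≃ᵃ[ℝ] (ℝ × ℝ))
    (he : MeasurePreserving e) (hs : e '' cornerTriangle 1 ⊆ s) (hf : ConvexOn ℝ s f)
    (hint : IntegrableOn f s) :
    ∫ p in e '' cornerTriangle 1, f p ≤ (f (e (0, 0)) + f (e (1, 0)) + f (e (0, 1))) / 6 := by
  have hemb : MeasurableEmbedding e := e.toContinuousAffineEquiv.toHomeomorph.measurableEmbedding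
  rw [he.setIntegral_image_emb hemb]
  exact hermiteHadamard_cornerTriangle_one (f := f ∘ e)
    ((hf.comp_affineMap (e : (ℝ × ℝ) →ᵃ[ℝ] (ℝ × ℝ))).subset (Set.image_subset_iff.1 hs)
      convex_cornerTriangle)
    ((he.integrableOn_image hemb).1 (hint.mono_set hs))

end CornerTriangle

open Finset.HasAntidiagonal (antidiagonal mem_antidiagonal)

section Trapezoid

/-- The lower half `conv {(a, b), (a + 1, b), (a, b + 1)}` of the unit square at `p = (a, b)`. -/
def lowerCell (p : ℕ × ℕ) : Set (ℝ × ℝ) := {x | p.1 ≤ x.1 ∧ p.2 ≤ x.2 ∧ x.1 + x.2 ≤ p.1 + p.2 + 1}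

/-- The upper half `conv {(a + 1, b + 1), (a, b + 1), (a + 1, b)}` of the unit square at
`p = (a, b)`. -/
def upperCell (p : ℕ × ℕ) : Set (ℝ × ℝ) :=
  {x | x.1 ≤ p.1 + 1 ∧ x.2 ≤ p.2 + 1 ∧ p.1 + p.2 + 1 ≤ x.1 + x.2}

/-- Six times the trapezoid rule for `F` on `cornerTriangle n`: the sum of the values of `F` at the
vertices of each lower and upper cell of the triangulation. -/
def trapezoidSum (F : ℝ × ℝ → ℝ) (n : ℕ) : ℝ :=
  ∑ j ∈ Finset.range n, ∑ p ∈ antidiagonal j,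
      (F (p.1, p.2) + F (p.1 + 1, p.2) + F (p.1, p.2 + 1)) +
    ∑ j ∈ Finset.range (n - 1), ∑ p ∈ antidiagonal j,
      (F (p.1 + 1, p.2 + 1) + F (p.1, p.2 + 1) + F (p.1 + 1, p.2))

variable {n : ℕ} {F : ℝ × ℝ → ℝ} {p : ℕ × ℕ}

lemma lowerCell_eq_image (p : ℕ × ℕ) : lowerCell p =
    AffineEquiv.constVAdd ℝ (ℝ × ℝ) ((p.1 : ℝ), (p.2 : ℝ)) '' cornerTriangle 1 := by
  rw [← AffineEquiv.preimage_symm]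
  ext x
  simp only [lowerCell, cornerTriangle, AffineEquiv.constVAdd_symm, Set.mem_preimage,
    Set.mem_ofPred_eq, AffineEquiv.constVAdd_apply, vadd_eq_add, Prod.fst_add, Prod.snd_add,
    Prod.fst_neg, Prod.snd_neg]
  constructor <;> rintro ⟨h1, h2, h3⟩ <;> refine ⟨?_, ?_, ?_⟩ <;> linarith

lemma upperCell_eq_image (p : ℕ × ℕ) : upperCell p =
    AffineEquiv.constVSub ℝ ((p.1 : ℝ) + 1, (p.2 : ℝ) + 1) '' cornerTriangle 1 := by
  rw [← AffineEquiv.preimage_symm]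
  ext x
  simp only [upperCell, cornerTriangle, Set.mem_preimage,
    Set.mem_ofPred_eq, AffineEquiv.coe_constVSub_symm, vadd_eq_add, Prod.fst_add, Prod.snd_add,
    Prod.fst_neg, Prod.snd_neg]
  constructor <;> rintro ⟨h1, h2, h3⟩ <;> refine ⟨?_, ?_, ?_⟩ <;> linarith

lemma measurableSet_lowerCell : MeasurableSet (lowerCell p) := by
  rw [lowerCell_eq_image]
  exact (isCompact_cornerTriangle.image
    (AffineEquiv.continuous_of_finiteDimensional _)).measurableSet

lemma measurableSet_upperCell : MeasurableSet (upperCell p) := by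
  rw [upperCell_eq_image]
  exact (isCompact_cornerTriangle.image
    (AffineEquiv.continuous_of_finiteDimensional _)).measurableSet

lemma lowerCell_subset (hp : p.1 + p.2 < n) : lowerCell p ⊆ cornerTriangle n := by
  have hp' : (p.1 : ℝ) + p.2 + 1 ≤ n := by exact_mod_cast hp
  rintro x ⟨h1, h2, h3⟩
  exact ⟨p.1.cast_nonneg.trans h1, p.2.cast_nonneg.trans h2, h3.trans hp'⟩

lemma upperCell_subset (hp : p.1 + p.2 < n - 1) : upperCell p ⊆ cornerTriangle n := by
  have hp' : (p.1 : ℝ) + p.2 + 2 ≤ n := by exact_mod_cast (show p.1 + p.2 + 2 ≤ n by omega)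
  rintro x ⟨h1, h2, h3⟩
  exact ⟨by linarith [p.1.cast_nonneg (α := ℝ)], by linarith [p.2.cast_nonneg (α := ℝ)],
    by linarith⟩

lemma exists_mem_cell (hn : 1 ≤ n) {x : ℝ × ℝ} (hx : x ∈ cornerTriangle n) :
    (∃ p : ℕ × ℕ, p.1 + p.2 < n ∧ x ∈ lowerCell p) ∨
      ∃ p : ℕ × ℕ, p.1 + p.2 < n - 1 ∧ x ∈ upperCell p := by
  obtain ⟨hx1, hx2, hx12⟩ := hx
  set a := ⌊x.1⌋₊
  set b := ⌊x.2⌋₊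
  have ha : (a : ℝ) ≤ x.1 := Nat.floor_le hx1
  have ha' : x.1 < a + 1 := Nat.lt_floor_add_one _
  have hb : (b : ℝ) ≤ x.2 := Nat.floor_le hx2
  have hb' : x.2 < b + 1 := Nat.lt_floor_add_one _
  rcases lt_or_ge ((a : ℝ) + b + 1) (x.1 + x.2) with hupper | hlower
  · have hab : a + b + 1 < n := by exact_mod_cast hupper.trans_le hx12
    exact .inr ⟨(a, b), by grind, ha'.le, hb'.le, hupper.le⟩
  left
  have hab : a + b ≤ n := by exact_mod_cast (add_le_add ha hb).trans hx12
  rcases hab.lt_or_eq with hlt | heq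
  · exact ⟨(a, b), hlt, ha, hb, hlower⟩
  -- Otherwise `x = (a, b)` is a lattice point of the hypotenuse, shared by smaller cells.
  have heq' : (a : ℝ) + b = n := by exact_mod_cast heq
  rcases a.eq_zero_or_pos with ha0 | ha0
  · refine ⟨(a, b - 1), by grind, ha, ?_, ?_⟩ <;> push_cast [show 1 ≤ b by omega] <;> linarith
  · refine ⟨(a - 1, b), by grind, ?_, hb, ?_⟩ <;> push_cast [show 1 ≤ a by omega] <;> linarith

lemma setIntegral_lowerCell_le (hF : ConvexOn ℝ (cornerTriangle n) F)
    (hint : IntegrableOn F (cornerTriangle n)) (hp : p.1 + p.2 < n) :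
    ∫ x in lowerCell p, F x ≤ (F (p.1, p.2) + F (p.1 + 1, p.2) + F (p.1, p.2 + 1)) / 6 := by
  have hsub := lowerCell_subset hp
  rw [lowerCell_eq_image] at hsub ⊢
  simpa using hermiteHadamard_image_cornerTriangle_one (AffineEquiv.constVAdd ℝ (ℝ × ℝ) _)
    (measurePreserving_add_left volume _) hsub hF hint

lemma setIntegral_upperCell_le (hF : ConvexOn ℝ (cornerTriangle n) F)
    (hint : IntegrableOn F (cornerTriangle n)) (hp : p.1 + p.2 < n - 1) :
    ∫ x in upperCell p, F x ≤
      (F (p.1 + 1, p.2 + 1) + F (p.1, p.2 + 1) + F (p.1 + 1, p.2)) / 6 := by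
  have hsub := upperCell_subset hp
  rw [upperCell_eq_image] at hsub ⊢
  simpa using hermiteHadamard_image_cornerTriangle_one (AffineEquiv.constVSub ℝ _)
    (Measure.measurePreserving_sub_left volume _) hsub hF hint

theorem setIntegral_le_trapezoidSum (hn : 1 ≤ n) (hF : ConvexOn ℝ (cornerTriangle n) F)
    (hint : IntegrableOn F (cornerTriangle n)) (hnonneg : ∀ x ∈ cornerTriangle n, 0 ≤ F x) :
    ∫ x in cornerTriangle n, F x ≤ trapezoidSum F n / 6 := by
  let I : Finset ((Σ _ : ℕ, ℕ × ℕ) ⊕ (Σ _ : ℕ, ℕ × ℕ)) :=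
    ((Finset.range n).sigma antidiagonal).disjSum ((Finset.range (n - 1)).sigma antidiagonal)
  let T : (Σ _ : ℕ, ℕ × ℕ) ⊕ (Σ _ : ℕ, ℕ × ℕ) → Set (ℝ × ℝ) :=
    Sum.elim (fun c => lowerCell c.2) fun c => upperCell c.2
  have hlower {c : Σ _ : ℕ, ℕ × ℕ} : Sum.inl c ∈ I ↔ c.1 < n ∧ c.2.1 + c.2.2 = c.1 := by simp [I]
  have hupper {c : Σ _ : ℕ, ℕ × ℕ} : Sum.inr c ∈ I ↔ c.1 < n - 1 ∧ c.2.1 + c.2.2 = c.1 := by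
    simp [I]
  have hsub : ∀ i ∈ I, T i ⊆ cornerTriangle n := by
    rintro (c | c) hc
    · exact lowerCell_subset (by grind)
    · exact upperCell_subset (by grind)
  have hcover : cornerTriangle n ⊆ ⋃ i ∈ I, T i := by
    intro x hx
    rw [Set.mem_iUnion₂]
    rcases exists_mem_cell hn hx with ⟨p, hp, hxp⟩ | ⟨p, hp, hxp⟩
    · exact ⟨.inl ⟨p.1 + p.2, p⟩, hlower.2 ⟨hp, rfl⟩, hxp⟩
    · exact ⟨.inr ⟨p.1 + p.2, p⟩, hupper.2 ⟨hp, rfl⟩, hxp⟩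
  calc ∫ x in cornerTriangle n, F x ≤ ∑ i ∈ I, ∫ x in T i, F x :=
        setIntegral_le_sum_of_subset_biUnion hcover
          (by rintro (c | c) -; exacts [measurableSet_lowerCell, measurableSet_upperCell])
          (fun i hi => hint.mono_set (hsub i hi)) fun i hi x hx => hnonneg x (hsub i hi hx)
    _ ≤ trapezoidSum F n / 6 := by
        rw [trapezoidSum, add_div, Finset.sum_disjSum, Finset.sum_sigma, Finset.sum_sigma]
        simp only [Finset.sum_div]
        refine add_le_add (Finset.sum_le_sum fun j hj => Finset.sum_le_sum fun p hp => ?_)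
          (Finset.sum_le_sum fun j hj => Finset.sum_le_sum fun p hp => ?_)
        · exact setIntegral_lowerCell_le hF hint
            ((mem_antidiagonal.1 hp).trans_lt (Finset.mem_range.1 hj))
        · exact setIntegral_upperCell_le hF hint
            ((mem_antidiagonal.1 hp).trans_lt (Finset.mem_range.1 hj))

end Trapezoid

/-- The triangle with vertices `(0, r)`, `(r, 0)`, `(-r, -r)`, cut out by its three sides. The
polytope `kΔ₃` is `momentTriangle (3 * k)`. -/
def momentTriangle (r : ℝ) : Set (ℝ × ℝ) :=
  {p | p.1 + p.2 ≤ r ∧ p.2 - 2 * p.1 ≤ r ∧ p.1 - 2 * p.2 ≤ r}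

section MomentTriangle

variable {r : ℝ}

lemma convex_momentTriangle : Convex ℝ (momentTriangle r) :=
  (convex_halfSpace_le (LinearMap.fst ℝ ℝ ℝ + LinearMap.snd ℝ ℝ ℝ).isLinear r).inter <|
    (convex_halfSpace_le (LinearMap.snd ℝ ℝ ℝ - (2 : ℝ) • LinearMap.fst ℝ ℝ ℝ).isLinear r).inter <|
      convex_halfSpace_le (LinearMap.fst ℝ ℝ ℝ - (2 : ℝ) • LinearMap.snd ℝ ℝ ℝ).isLinear r

lemma cornerTriangle_subset_momentTriangle : cornerTriangle r ⊆ momentTriangle r := by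
  rintro p ⟨h1, h2, h3⟩
  exact ⟨h3, by linarith, by linarith⟩

lemma momentTriangle_eq_convexHull (hr : 0 < r) :
    momentTriangle r = convexHull ℝ {(0, r), (r, 0), (-r, -r)} := by
  apply Set.Subset.antisymm
  · rintro p ⟨h1, h2, h3⟩
    have hbary : ∑ i, ![(r + 2 * p.2 - p.1) / (3 * r), (r + 2 * p.1 - p.2) / (3 * r),
        (r - p.1 - p.2) / (3 * r)] i • ![((0 : ℝ), r), (r, 0), (-r, -r)] i = p := by
      ext <;> simp [Fin.sum_univ_three] <;> field_simp <;> ring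
    rw [← hbary]
    refine (convex_convexHull ℝ _).sum_mem (fun i _ => ?_) ?_ fun i _ => subset_convexHull ℝ _ ?_
    · fin_cases i <;> exact div_nonneg (by linarith) (by positivity)
    · simp only [Fin.sum_univ_three, Matrix.cons_val]
      field_simp
      ring
    · fin_cases i <;> simp
  · refine convexHull_min ?_ convex_momentTriangle
    rintro p (rfl | rfl | rfl) <;> refine ⟨?_, ?_, ?_⟩ <;> simp only <;> linarith

lemma isCompact_momentTriangle (hr : 0 < r) : IsCompact (momentTriangle r) := by
  rw [momentTriangle_eq_convexHull hr]
  exact (Set.toFinite _).isCompact_convexHull ℝ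

lemma smul_Δ₃ {k : ℝ} (hk : 0 < k) : k • Δ₃ = momentTriangle (3 * k) := by
  rw [Δ₃, ← convexHull_smul, momentTriangle_eq_convexHull (by positivity)]
  simp only [Set.smul_set_insert, Set.smul_set_singleton, Prod.smul_mk, smul_eq_mul, zero_mul,
    neg_mul, mul_comm k]

lemma momentTriangle_eq_preimage : momentTriangle r =
    Matrix.toLin (Module.Basis.finTwoProd ℝ) (Module.Basis.finTwoProd ℝ) !![2, -1; -1, 2] ⁻¹'
      ((fun p => (r, r) + p) ⁻¹' cornerTriangle (3 * r)) := by
  ext p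
  simp only [momentTriangle, cornerTriangle, Set.mem_preimage, Set.mem_ofPred_eq,
    Matrix.toLin_finTwoProd_apply, Prod.fst_add, Prod.snd_add]
  constructor <;> rintro ⟨h1, h2, h3⟩ <;> refine ⟨?_, ?_, ?_⟩ <;> linarith

lemma volume_momentTriangle (hr : 0 ≤ r) : volume.real (momentTriangle r) = 3 * r ^ 2 / 2 := by
  have hdet : LinearMap.det (Matrix.toLin (Module.Basis.finTwoProd ℝ) (Module.Basis.finTwoProd ℝ)
      !![(2 : ℝ), -1; -1, 2]) = 3 := by
    rw [LinearMap.det_toLin, Matrix.det_fin_two_of]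
    norm_num
  rw [momentTriangle_eq_preimage, measureReal_def,
    Measure.addHaar_preimage_linearMap _ (by rw [hdet]; norm_num), measure_preimage_add, hdet,
    ENNReal.toReal_mul, ← measureReal_def, volume_cornerTriangle (by positivity),
    ENNReal.toReal_ofReal (abs_nonneg _), abs_of_pos (by norm_num)]
  ring

end MomentTriangle

section Rotation

variable {r : ℝ} {p q : ℝ × ℝ} {i j : ℕ}

lemma σ₃_mem_momentTriangle (hp : p ∈ momentTriangle r) : σ₃ p ∈ momentTriangle r := by
  obtain ⟨h1, h2, h3⟩ := hp
  refine ⟨?_, ?_, ?_⟩ <;> simp only [σ₃] <;> linarith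

lemma iterate_σ₃_mem_momentTriangle (i : ℕ) (hp : p ∈ momentTriangle r) :
    σ₃^[i] p ∈ momentTriangle r :=
  Set.MapsTo.iterate (fun _ => σ₃_mem_momentTriangle) i hp

lemma σ₃_mem_lat (hp : p ∈ lat) : σ₃ p ∈ lat := by
  obtain ⟨a, b, rfl⟩ := hp
  exact ⟨-b, a - b, by simp [σ₃]⟩

lemma iterate_σ₃_mem_lat (i : ℕ) (hp : p ∈ lat) : σ₃^[i] p ∈ lat :=
  Set.MapsTo.iterate (fun _ => σ₃_mem_lat) i hp

lemma iterate_two_σ₃ (p : ℝ × ℝ) : σ₃^[2] p = (p.2 - p.1, -p.1) :=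
  Prod.ext (neg_sub _ _) (show -p.2 - (p.1 - p.2) = -p.1 by ring)

lemma add_σ₃_add_iterate_two_σ₃ (p : ℝ × ℝ) : p + σ₃ p + σ₃^[2] p = 0 := by
  rw [iterate_two_σ₃]
  ext <;> simp only [σ₃, Prod.fst_add, Prod.snd_add, Prod.fst_zero, Prod.snd_zero] <;> ring

lemma iterate_three_σ₃ (p : ℝ × ℝ) : σ₃^[3] p = p := by
  rw [Function.iterate_succ_apply', iterate_two_σ₃]
  exact Prod.ext (neg_neg _) (show p.2 - p.1 - -p.1 = p.2 by ring)

lemma iterate_two_mul_σ₃_iterate (i : ℕ) (p : ℝ × ℝ) : σ₃^[2 * i] (σ₃^[i] p) = p := by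
  rw [← Function.iterate_add_apply, show 2 * i + i = 3 * i by ring, Function.iterate_mul,
    Function.iterate_fixed]
  exact iterate_three_σ₃ p

lemma iterate_σ₃_mem_momentTriangle_iff :
    σ₃^[i] p ∈ momentTriangle r ↔ p ∈ momentTriangle r := by
  refine ⟨fun h => ?_, iterate_σ₃_mem_momentTriangle i⟩
  simpa only [iterate_two_mul_σ₃_iterate] using iterate_σ₃_mem_momentTriangle (2 * i) h

lemma iterate_σ₃_mem_lat_iff : σ₃^[i] p ∈ lat ↔ p ∈ lat := by
  refine ⟨fun h => ?_, iterate_σ₃_mem_lat i⟩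
  simpa only [iterate_two_mul_σ₃_iterate] using iterate_σ₃_mem_lat (2 * i) h

lemma measurePreserving_σ₃ : MeasurePreserving σ₃ := by
  set L := Matrix.toLin (Module.Basis.finTwoProd ℝ) (Module.Basis.finTwoProd ℝ)
    !![(0 : ℝ), -1; 1, -1]
  have hL : ⇑L = σ₃ := by
    funext p
    simp [L, σ₃, Matrix.toLin_finTwoProd_apply, sub_eq_add_neg]
  have hdet : LinearMap.det L = 1 := by
    rw [LinearMap.det_toLin, Matrix.det_fin_two_of]
    norm_num
  rw [← hL]
  refine ⟨L.continuous_of_finiteDimensional.measurable, ?_⟩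
  rw [Measure.map_linearMap_addHaar_eq_smul_addHaar volume (by simp [hdet]), hdet]
  simp

lemma measurableEmbedding_σ₃ : MeasurableEmbedding σ₃ :=
  measurePreserving_σ₃.measurable.measurableEmbedding
    (Function.LeftInverse.injective (g := σ₃^[2]) iterate_three_σ₃)

lemma exists_iterate_σ₃_eq (hp : p ≠ 0) :
    ∃ i < 3, ∃ q : ℝ × ℝ, 0 < q.1 ∧ 0 ≤ q.2 ∧ σ₃^[i] q = p := by
  obtain ⟨x, y⟩ := p
  by_cases h₀ : 0 < x ∧ 0 ≤ y
  · exact ⟨0, by norm_num, (x, y), h₀.1, h₀.2, rfl⟩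
  by_cases h₂ : y < 0 ∧ y ≤ x
  · exact ⟨2, by norm_num, (-y, x - y), neg_pos.2 h₂.1, sub_nonneg.2 h₂.2, by simp [iterate_two_σ₃]⟩
  have hxy : x ≠ 0 ∨ y ≠ 0 := by
    contrapose! hp
    exact Prod.ext hp.1 hp.2
  exact ⟨1, by norm_num, (y - x, -x), by grind, by grind, by simp [σ₃]⟩

lemma eq_of_iterate_σ₃_eq (hi : i < 3) (hj : j < 3) (hp1 : 0 < p.1) (hp2 : 0 ≤ p.2)
    (hq1 : 0 < q.1) (hq2 : 0 ≤ q.2) (h : σ₃^[i] p = σ₃^[j] q) : i = j ∧ p = q := by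
  rw [Prod.ext_iff] at h ⊢
  interval_cases i <;> interval_cases j <;>
    simp only [σ₃, Function.iterate_zero, Function.iterate_succ, Function.comp_apply, id] at h <;>
    grind

lemma momentTriangle_subset_iUnion_image :
    momentTriangle r ⊆ ⋃ i ∈ Finset.range 3, σ₃^[i] '' cornerTriangle r := by
  intro p hp
  simp only [Set.mem_iUnion, Finset.mem_range]
  obtain rfl | hp0 := eq_or_ne p 0
  · exact ⟨0, by norm_num, 0, ⟨le_rfl, le_rfl, hp.1⟩, rfl⟩
  obtain ⟨i, hi, q, hq1, hq2, rfl⟩ := exists_iterate_σ₃_eq hp0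
  exact ⟨i, hi, q, ⟨hq1.le, hq2, (iterate_σ₃_mem_momentTriangle_iff.1 hp).1⟩, rfl⟩

end Rotation

/-- The sum of `f` over the lattice points `(j - i, i)`, `0 ≤ i < j`, of the `j`-th antidiagonal of
the open sector `0 < x`, `0 ≤ y`, whose three rotations partition the nonzero lattice points. -/
def layerSum (f : ℝ × ℝ → ℝ) (j : ℕ) : ℝ := ∑ i ∈ Finset.range j, f ((j : ℝ) - i, i)

section LatticePoints

variable {n : ℕ} {r : ℝ} {f : ℝ × ℝ → ℝ}

lemma map_iterate_σ₃_of_map_σ₃ (hf : ∀ x ∈ momentTriangle r, f (σ₃ x) = f x) {p : ℝ × ℝ}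
    (hp : p ∈ momentTriangle r) (i : ℕ) : f (σ₃^[i] p) = f p := by
  induction i with
  | zero => rfl
  | succ i ih =>
    rw [Function.iterate_succ_apply', hf _ (iterate_σ₃_mem_momentTriangle i hp), ih]

lemma zero_mem_lat : (0 : ℝ × ℝ) ∈ lat := ⟨0, 0, by simp [Prod.ext_iff]⟩

lemma zero_mem_momentTriangle (hr : 0 ≤ r) : (0 : ℝ × ℝ) ∈ momentTriangle r := by
  simp [momentTriangle, hr]

lemma layer_mem_cornerTriangle {i j : ℕ} (hi : i ≤ j) (hj : j ≤ n) :
    ((j : ℝ) - i, (i : ℝ)) ∈ cornerTriangle n :=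
  ⟨sub_nonneg.2 (Nat.cast_le.2 hi), i.cast_nonneg, by simpa using hj⟩

lemma exists_layer_eq {q : ℝ × ℝ} (hq : q ∈ lat) (hq1 : 0 < q.1) (hq2 : 0 ≤ q.2)
    (hqn : q.1 + q.2 ≤ n) : ∃ j ≤ n, ∃ i < j, ((j : ℝ) - i, (i : ℝ)) = q := by
  obtain ⟨a, b, rfl⟩ := hq
  simp only at hq1 hq2 hqn
  norm_cast at hq1 hq2 hqn
  lift a to ℕ using hq1.le
  lift b to ℕ using hq2
  exact ⟨a + b, by lia, b, by lia, by simp⟩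

/-- The parameters `(r, j, i)` of the nonzero lattice points `σ₃^[r] (j - i, i)` of
`momentTriangle n`. -/
def latticeIndex (n : ℕ) : Finset (ℕ × Σ _ : ℕ, ℕ) :=
  Finset.range 3 ×ˢ (Finset.range (n + 1)).sigma Finset.range

lemma bijOn_latticeIndex (n : ℕ) :
    Set.BijOn (fun t : ℕ × Σ _ : ℕ, ℕ => σ₃^[t.1] ((t.2.1 : ℝ) - t.2.2, t.2.2))
      (latticeIndex n) ((momentTriangle n ∩ lat) \ {0}) := by
  have hmem {t : ℕ × Σ _ : ℕ, ℕ} :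
      t ∈ (latticeIndex n : Set _) ↔ t.1 < 3 ∧ t.2.1 ≤ n ∧ t.2.2 < t.2.1 := by
    simp [latticeIndex, Nat.lt_succ_iff]
  have hpos {t : ℕ × Σ _ : ℕ, ℕ} (ht : t.2.2 < t.2.1) : (0 : ℝ) < (t.2.1 : ℝ) - t.2.2 :=
    sub_pos.2 (Nat.cast_lt.2 ht)
  refine ⟨fun t ht => ?_, fun t ht u hu htu => ?_, fun p hp => ?_⟩
  · obtain ⟨-, hj, hi⟩ := hmem.1 ht
    refine ⟨⟨iterate_σ₃_mem_momentTriangle _ (cornerTriangle_subset_momentTriangle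
      (layer_mem_cornerTriangle hi.le hj)),
      iterate_σ₃_mem_lat _ ⟨(t.2.1 : ℤ) - t.2.2, t.2.2, by simp⟩⟩, fun h => ?_⟩
    have h0 : σ₃^[t.1] 0 = 0 := Function.iterate_fixed (by simp [σ₃]) _
    have hinj := measurableEmbedding_σ₃.injective.iterate t.1 (h.trans h0.symm)
    exact (hpos hi).ne' (congrArg Prod.fst hinj)
  · obtain ⟨ht3, -, hti⟩ := hmem.1 ht
    obtain ⟨hu3, -, hui⟩ := hmem.1 hu
    obtain ⟨r, j, i⟩ := t
    obtain ⟨r', j', i'⟩ := u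
    obtain ⟨hr, hp⟩ := eq_of_iterate_σ₃_eq ht3 hu3 (hpos hti) (Nat.cast_nonneg _) (hpos hui)
      (Nat.cast_nonneg _) htu
    obtain ⟨hji, hi⟩ := Prod.ext_iff.1 hp
    simp only [Nat.cast_inj] at hi
    subst hi
    simp only [sub_left_inj, Nat.cast_inj] at hji hr
    rw [hr, hji]
  · obtain ⟨⟨hpn, hplat⟩, hp0⟩ := hp
    obtain ⟨r, hr, q, hq1, hq2, rfl⟩ := exists_iterate_σ₃_eq hp0
    obtain ⟨j, hj, i, hi, rfl⟩ := exists_layer_eq (iterate_σ₃_mem_lat_iff.1 hplat) hq1 hq2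
      (iterate_σ₃_mem_momentTriangle_iff.1 hpn).1
    exact ⟨(r, ⟨j, i⟩), hmem.2 ⟨hr, hj, hi⟩, rfl⟩

lemma finite_momentTriangle_inter_lat (n : ℕ) : (momentTriangle n ∩ lat).Finite := by
  refine Set.Finite.of_sdiff ?_ (Set.finite_singleton 0)
  rw [← (bijOn_latticeIndex n).image_eq]
  exact (latticeIndex n).finite_toSet.image _

lemma finsum_mem_momentTriangle_inter_lat (hf : ∀ x ∈ momentTriangle n, f (σ₃ x) = f x) :
    ∑ᶠ x ∈ momentTriangle n ∩ lat, f x =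
      f 0 + 3 * ∑ j ∈ Finset.range (n + 1), layerSum f j := by
  have h0 : (0 : ℝ × ℝ) ∈ momentTriangle n ∩ lat :=
    ⟨zero_mem_momentTriangle n.cast_nonneg, zero_mem_lat⟩
  rw [← Set.insert_sdiff_self_of_mem h0, finsum_mem_insert _ (by simp)
    ((finite_momentTriangle_inter_lat n).subset Set.sdiff_subset),
    ← finsum_mem_eq_of_bijOn _ (bijOn_latticeIndex n) fun _ _ => rfl, finsum_mem_coe_finset]
  simp only [latticeIndex, Finset.sum_product, Finset.sum_sigma, layerSum]
  have hterm (r j i) (hj : j ∈ Finset.range (n + 1)) (hi : i ∈ Finset.range j) :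
      f (σ₃^[r] ((j : ℝ) - i, i)) = f ((j : ℝ) - i, i) :=
    map_iterate_σ₃_of_map_σ₃ hf (cornerTriangle_subset_momentTriangle (layer_mem_cornerTriangle
      (Finset.mem_range.1 hi).le (Finset.mem_range_succ_iff.1 hj))) r
  simp +contextual [hterm]

lemma ncard_momentTriangle_inter_lat (n : ℕ) :
    ((momentTriangle n ∩ lat).ncard : ℝ) = 1 + 3 * (n * (n + 1)) / 2 := by
  have h := finsum_mem_momentTriangle_inter_lat (n := n) (f := 1) fun _ _ => rfl
  simp only [layerSum, Pi.one_apply, Finset.sum_const, Finset.card_range, nsmul_one,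
    finsum_mem_const_eq_ncard_nsmul (finite_momentTriangle_inter_lat n)] at h
  rw [sum_range_natCast] at h
  push_cast at h
  linarith

lemma momentTriangle_subset_convexHull_inter_lat (hn : 1 ≤ n) :
    momentTriangle n ⊆ convexHull ℝ (momentTriangle n ∩ lat) := by
  have hn' : (0 : ℝ) < n := by exact_mod_cast hn
  nth_rw 1 [momentTriangle_eq_convexHull hn']
  refine convexHull_mono ?_
  have hvert : {((0 : ℝ), (n : ℝ)), (↑n, 0), (-↑n, -↑n)} ⊆ momentTriangle n :=
    (subset_convexHull ℝ _).trans (momentTriangle_eq_convexHull hn').superset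
  refine Set.subset_inter hvert ?_
  rintro _ (rfl | rfl | rfl)
  · exact ⟨0, n, by simp⟩
  · exact ⟨n, 0, by simp⟩
  · exact ⟨-n, -n, by simp⟩

end LatticePoints

/-- `F` is convex on `momentTriangle r` and invariant there under the generators `σ₃` and `sw` of
the Weyl group. -/
structure InvariantConvexOn (r : ℝ) (F : ℝ × ℝ → ℝ) : Prop where
  convexOn : ConvexOn ℝ (momentTriangle r) F
  map_σ₃ : ∀ x ∈ momentTriangle r, F (σ₃ x) = F x
  map_sw : ∀ x ∈ momentTriangle r, F (sw x) = F x

namespace InvariantConvexOn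

variable {r : ℝ} {F : ℝ × ℝ → ℝ}

lemma map_iterate_σ₃ (hF : InvariantConvexOn r F) {x : ℝ × ℝ} (hx : x ∈ momentTriangle r)
    (i : ℕ) : F (σ₃^[i] x) = F x :=
  map_iterate_σ₃_of_map_σ₃ hF.map_σ₃ hx i

lemma map_zero_le (hF : InvariantConvexOn r F) {x : ℝ × ℝ} (hx : x ∈ momentTriangle r) :
    F 0 ≤ F x := by
  have horbit : (3 : ℝ)⁻¹ • x + (3 : ℝ)⁻¹ • σ₃ x + (3 : ℝ)⁻¹ • σ₃^[2] x = 0 := by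
    rw [← smul_add, ← smul_add, add_σ₃_add_iterate_two_σ₃, smul_zero]
  have h := map_three_le_of_convexOn hF.convexOn hx (σ₃_mem_momentTriangle hx)
    (iterate_σ₃_mem_momentTriangle 2 hx) (a := 3⁻¹) (b := 3⁻¹) (c := 3⁻¹)
    (by norm_num) (by norm_num) (by norm_num) (by norm_num)
  rw [horbit, hF.map_σ₃ x hx, hF.map_iterate_σ₃ hx] at h
  linarith

lemma le_map_corner (hF : InvariantConvexOn r F) (hr : 0 < r) {x : ℝ × ℝ}
    (hx : x ∈ momentTriangle r) : F x ≤ F (r, 0) := by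
  have hcorner : (r, 0) ∈ momentTriangle r := by
    refine ⟨?_, ?_, ?_⟩ <;> simp only <;> linarith
  have htop : F (0, r) = F (r, 0) := hF.map_sw _ hcorner
  have hbot : F (-r, -r) = F (r, 0) := by
    rw [← hF.map_iterate_σ₃ hcorner 2, iterate_two_σ₃]
    simp
  rw [momentTriangle_eq_convexHull hr] at hx
  obtain ⟨y, hy, hxy⟩ :=
    (momentTriangle_eq_convexHull hr ▸ hF.convexOn).exists_ge_of_mem_convexHull
      (subset_convexHull ℝ _) hx
  rcases hy with rfl | rfl | rfl <;> linarith

lemma integrableOn (hF : InvariantConvexOn r F) (hr : 0 < r) :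
    IntegrableOn F (momentTriangle r) :=
  integrableOn_of_convexOn_of_bounded hF.convexOn (isCompact_momentTriangle hr).measure_lt_top
    fun _ hx => abs_le_max_abs_abs (hF.map_zero_le hx) (hF.le_map_corner hr hx)

lemma setIntegral_le (hF : InvariantConvexOn r F) (hr : 0 < r)
    (hnonneg : ∀ x ∈ momentTriangle r, 0 ≤ F x) :
    ∫ x in momentTriangle r, F x ≤ 3 * ∫ x in cornerTriangle r, F x := by
  have hemb (i : ℕ) : MeasurableEmbedding σ₃^[i] :=
    (measurePreserving_σ₃.iterate i).measurable.measurableEmbedding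
      (measurableEmbedding_σ₃.injective.iterate i)
  have hsub (i : ℕ) : σ₃^[i] '' cornerTriangle r ⊆ momentTriangle r :=
    Set.image_subset_iff.2 fun x hx =>
      iterate_σ₃_mem_momentTriangle i (cornerTriangle_subset_momentTriangle hx)
  have hcopy (i : ℕ) :
      ∫ x in σ₃^[i] '' cornerTriangle r, F x = ∫ x in cornerTriangle r, F x := by
    rw [(measurePreserving_σ₃.iterate i).setIntegral_image_emb (hemb i)]
    exact setIntegral_congr_fun measurableSet_cornerTriangle fun x hx =>
      hF.map_iterate_σ₃ (cornerTriangle_subset_momentTriangle hx) i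
  calc ∫ x in momentTriangle r, F x
      ≤ ∑ i ∈ Finset.range 3, ∫ x in σ₃^[i] '' cornerTriangle r, F x :=
        setIntegral_le_sum_of_subset_biUnion momentTriangle_subset_iUnion_image
          (fun i _ => (hemb i).measurableSet_image.2 measurableSet_cornerTriangle)
          (fun i _ => (hF.integrableOn hr).mono_set (hsub i)) fun i _ x hx => hnonneg x (hsub i hx)
    _ = 3 * ∫ x in cornerTriangle r, F x := by simp [hcopy]

lemma mul_map_le (hF : InvariantConvexOn r F) (h0 : F 0 = 0) {x y : ℝ} (hy : 0 ≤ y)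
    (hyx : y ≤ x) (hxy : x + y < r) : r * F (x, y) ≤ (x + y) * F (r - y, y) := by
  have hd : 0 < r - 2 * y := by linarith
  have hr : 0 < r := by linarith
  have hz : (r - y, y) ∈ momentTriangle r := by
    refine ⟨?_, ?_, ?_⟩ <;> simp only <;> linarith
  have hz' : (y, r - y) ∈ momentTriangle r := by
    refine ⟨?_, ?_, ?_⟩ <;> simp only <;> linarith
  have hswap : F (y, r - y) = F (r - y, y) := hF.map_sw _ hz
  -- Jensen's inequality for `(x, y)` as a point of the triangle `(r - y, y)`, `(y, r - y)`, `0`.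
  set s := (x + y) / r with hs
  set d := (x - y) / (r - 2 * y) with hd_def
  have hsr : s * r = x + y := div_mul_cancel₀ _ hr.ne'
  have hdr : d * (r - 2 * y) = x - y := div_mul_cancel₀ _ hd.ne'
  have hd0 : 0 ≤ d := div_nonneg (by linarith) hd.le
  have hs1 : s ≤ 1 := (div_le_one hr).2 hxy.le
  have hds : d ≤ s := by
    rw [hs, hd_def, div_le_div_iff₀ hd hr]
    nlinarith
  have hcomb : ((s + d) / 2) • (r - y, y) + ((s - d) / 2) • (y, r - y) +
      (1 - s) • (0 : ℝ × ℝ) = (x, y) := by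
    ext <;> simp only [Prod.smul_mk, smul_eq_mul, Prod.mk_add_mk, smul_zero, add_zero]
    · linear_combination (1 / 2) * hdr + (1 / 2) * hsr
    · linear_combination (-1 / 2) * hdr + (1 / 2) * hsr
  have hle := map_three_le_of_convexOn hF.convexOn hz hz' (zero_mem_momentTriangle hr.le)
    (a := (s + d) / 2) (b := (s - d) / 2) (c := 1 - s)
    (by linarith) (by linarith) (by linarith) (by ring)
  rw [hcomb, hswap, h0] at hle
  calc r * F (x, y) ≤ r * (s * F (r - y, y)) :=
        mul_le_mul_of_nonneg_left (by linarith) hr.le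
    _ = (x + y) * F (r - y, y) := by rw [← hsr]; ring

end InvariantConvexOn

section Layers

variable {n : ℕ} {F : ℝ × ℝ → ℝ}

lemma sum_antidiagonal_eq_sum_range (f : ℝ × ℝ → ℝ) (j : ℕ) :
    ∑ p ∈ antidiagonal j, f (p.1, p.2) = ∑ i ∈ Finset.range (j + 1), f ((j : ℝ) - i, i) := by
  rw [← Finset.Nat.sum_antidiagonal_swap, Finset.Nat.sum_antidiagonal_eq_sum_range_succ_mk]
  refine Finset.sum_congr rfl fun i hi => ?_
  simp only [Prod.fst_swap, Prod.snd_swap, Nat.cast_sub (Finset.mem_range_succ_iff.1 hi)]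

lemma sum_antidiagonal_eq_layerSum_add (F : ℝ × ℝ → ℝ) (j : ℕ) :
    ∑ p ∈ antidiagonal j, F (p.1, p.2) = layerSum F j + F (0, j) := by
  rw [sum_antidiagonal_eq_sum_range, Finset.sum_range_succ, layerSum, sub_self]

lemma sum_antidiagonal_succ_fst (F : ℝ × ℝ → ℝ) (j : ℕ) :
    ∑ p ∈ antidiagonal j, F (p.1 + 1, p.2) = layerSum F (j + 1) := by
  rw [sum_antidiagonal_eq_sum_range (fun x => F (x.1 + 1, x.2)), layerSum]
  simp only [Nat.cast_succ, add_sub_right_comm]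

lemma sum_antidiagonal_succ_succ (F : ℝ × ℝ → ℝ) (j : ℕ) :
    ∑ p ∈ antidiagonal j, F (p.1 + 1, p.2 + 1) = layerSum F (j + 2) - F (j + 2, 0) := by
  have hcast (i : ℕ) : ((j + 2 : ℕ) : ℝ) - (i + 1 : ℕ) = (j : ℝ) - i + 1 := by push_cast; ring
  rw [sum_antidiagonal_eq_sum_range (fun x => F (x.1 + 1, x.2 + 1)), layerSum,
    Finset.sum_range_succ' _ (j + 1)]
  simp only [hcast]
  simp

lemma sum_antidiagonal_succ_snd (hsymm : ∀ a b : ℕ, a + b ≤ n → F (a, b) = F (b, a)) {j : ℕ}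
    (hj : j < n) : ∑ p ∈ antidiagonal j, F (p.1, p.2 + 1) = layerSum F (j + 1) := by
  rw [← sum_antidiagonal_succ_fst, ← Finset.Nat.sum_antidiagonal_swap]
  refine Finset.sum_congr rfl fun p hp => ?_
  have h := hsymm p.2 (p.1 + 1) (by have := mem_antidiagonal.1 hp; lia)
  simpa using h

lemma trapezoidSum_eq (hn : 1 ≤ n) (h0 : F 0 = 0)
    (hsymm : ∀ a b : ℕ, a + b ≤ n → F (a, b) = F (b, a)) :
    trapezoidSum F n =
      6 * ∑ j ∈ Finset.range n, layerSum F j + 3 * layerSum F n - F (n, 0) := by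
  induction n, hn using Nat.le_induction with
  | base =>
    have h10 : F (0, 1) = F (1, 0) := by simpa using hsymm 0 1
    have hrect : F 0 + F (1, 0) + F (1, 0) = 3 * F (1, 0) - F (1, 0) := by rw [h0]; ring
    simpa [trapezoidSum, layerSum, ← Prod.zero_eq_mk, h0, h10] using hrect
  | succ n hn ih =>
    obtain ⟨m, rfl⟩ := Nat.exists_eq_add_of_le' hn
    have h := ih fun a b hab => hsymm a b (hab.trans (Nat.le_succ _))
    have hside := hsymm 0 (m + 1) (by lia)
    simp only [trapezoidSum, Nat.add_sub_cancel, Finset.sum_add_distrib,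
      sum_antidiagonal_eq_layerSum_add, sum_antidiagonal_succ_fst,
      sum_antidiagonal_succ_succ] at h ⊢
    simp only [Finset.sum_range_succ] at h ⊢
    rw [sum_antidiagonal_succ_snd hsymm (j := m) (by lia)] at h ⊢
    rw [sum_antidiagonal_succ_snd hsymm (j := m + 1) (by lia)]
    push_cast at h hside ⊢
    simp only [add_assoc, one_add_one_eq_two] at h hside ⊢
    linarith

end Layers

section Weights

variable {n i : ℕ}

/-- For `1 ≤ i`, the number of `m` with `1 ≤ m < n` and `min m (n - m) = i`. -/
def foldWeight (n i : ℕ) : ℝ := if 2 * i < n then 2 else if 2 * i = n then 1 else 0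

/-- For `1 ≤ i`, the sum of `j * foldWeight j i` over `j < n`. -/
def layerWeight (n i : ℕ) : ℝ := if 2 * i < n then n * (n - 1) - 4 * i ^ 2 else 0

lemma sum_Ico_min_sub (h : ℕ → ℝ) (n : ℕ) :
    ∑ i ∈ Finset.Ico 1 n, h (min i (n - i)) = ∑ i ∈ Finset.Ico 1 n, foldWeight n i * h i := by
  have hsplit (i : ℕ) : h (min i (n - i)) =
      (if 2 * i ≤ n then h i else 0) + if n < 2 * i then h (n - i) else 0 := by
    grind
  have hreflect : ∑ i ∈ Finset.Ico 1 n, (if n < 2 * i then h (n - i) else 0) =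
      ∑ i ∈ Finset.Ico 1 n, if 2 * i < n then h i else 0 := by
    refine Finset.sum_nbij' (n - ·) (n - ·) ?_ ?_ ?_ ?_ ?_ <;> grind
  simp only [hsplit]
  rw [Finset.sum_add_distrib, hreflect, ← Finset.sum_add_distrib]
  exact Finset.sum_congr rfl fun i _ => by grind [foldWeight]

lemma layerWeight_succ (n i : ℕ) :
    layerWeight (n + 1) i = layerWeight n i + n * foldWeight n i := by
  have hcast : n = 2 * i → (n : ℝ) = 2 * i := fun h => by exact_mod_cast h
  simp only [layerWeight, foldWeight]
  push_cast
  rcases lt_trichotomy (2 * i) n with hi | hi | hi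
  · rw [if_pos (by lia), if_pos hi, if_pos hi]; ring
  · rw [if_pos (by lia), if_neg (by lia), if_neg (by lia), if_pos hi, hcast hi.symm]; ring
  · rw [if_neg (by lia), if_neg (by lia), if_neg (by lia), if_neg (by lia)]; ring

lemma sum_mul_sum_Ico_min_sub (h : ℕ → ℝ) (n : ℕ) :
    ∑ j ∈ Finset.range n, (j : ℝ) * ∑ i ∈ Finset.Ico 1 j, h (min i (j - i)) =
      ∑ i ∈ Finset.Ico 1 n, layerWeight n i * h i := by
  induction n with
  | zero => simp
  | succ n ih =>
    obtain rfl | hn := Nat.eq_zero_or_pos n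
    · simp
    have htop : layerWeight (n + 1) n = 0 := if_neg (by lia)
    rw [Finset.sum_range_succ, ih, sum_Ico_min_sub, Finset.sum_Ico_succ_top hn, htop, zero_mul,
      add_zero, Finset.mul_sum, ← Finset.sum_add_distrib]
    exact Finset.sum_congr rfl fun i _ => by rw [layerWeight_succ]; ring

lemma layerWeight_excess_le (hi : 1 ≤ i) (hin : i < n) :
    (18 * n + 12) * layerWeight n i - n * (9 * n ^ 2 - 9 * n - 6) * foldWeight n i ≤
      if 6 * i ≤ n then 12 * (n : ℝ) ^ 2 else 0 := by
  have hi' : (1 : ℝ) ≤ i := by exact_mod_cast hi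
  have hin' : (i : ℝ) + 1 ≤ n := by exact_mod_cast hin
  rcases lt_trichotomy (2 * i) n with h | h | h
  · rw [layerWeight, foldWeight, if_pos h, if_pos h]
    split_ifs with h6
    · nlinarith [sq_nonneg (i : ℝ)]
    · have h6' : (n : ℝ) + 1 ≤ 6 * i := by exact_mod_cast not_le.1 h6
      have hsq : ((n : ℝ) + 1) ^ 2 ≤ 36 * i ^ 2 := by nlinarith
      have hcubic : 0 ≤ ((n : ℝ) - 2) * (6 * n ^ 2 - 8 * n - 2) :=
        mul_nonneg (by linarith) (by nlinarith)
      nlinarith [mul_le_mul_of_nonneg_left hsq (show 0 ≤ 6 * (n : ℝ) + 4 by positivity)]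
  · rw [layerWeight, foldWeight, if_neg (by lia), if_neg (by lia), if_pos h, if_neg (by lia)]
    have hquad : 0 ≤ 9 * (n : ℝ) ^ 2 - 9 * n - 6 := by nlinarith
    nlinarith [mul_nonneg n.cast_nonneg hquad]
  · rw [layerWeight, foldWeight, if_neg (by lia), if_neg (by lia), if_neg (by lia)]
    split_ifs <;> nlinarith

lemma sum_layerWeight_mul_le {h : ℕ → ℝ} (hn : 1 ≤ n) (hnonneg : ∀ i < n, 0 ≤ h i)
    (hle : ∀ i < n, h i ≤ h 0) :
    (18 * n + 12) * ∑ i ∈ Finset.Ico 1 n, layerWeight n i * h i ≤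
      n * (9 * n ^ 2 - 9 * n - 6) * ∑ i ∈ Finset.Ico 1 n, foldWeight n i * h i +
        3 * n ^ 2 * (n - 1) * h 0 := by
  have hterm (i) (hi : i ∈ Finset.Ico 1 n) :
      (18 * n + 12) * (layerWeight n i * h i) -
        n * (9 * n ^ 2 - 9 * n - 6) * (foldWeight n i * h i) ≤
      if 6 * i ≤ n then 12 * (n : ℝ) ^ 2 * h 0 else 0 := by
    obtain ⟨hi1, hin⟩ := Finset.mem_Ico.1 hi
    have := mul_le_mul_of_nonneg_right (layerWeight_excess_le hi1 hin) (hnonneg i hin)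
    have := mul_le_mul_of_nonneg_left (hle i hin) (show 0 ≤ 12 * (n : ℝ) ^ 2 by positivity)
    split_ifs at * <;> linarith
  have hcard : (4 * ((Finset.Ico 1 n).filter (6 * · ≤ n)).card : ℝ) ≤ n - 1 := by
    have hsub : (Finset.Ico 1 n).filter (6 * · ≤ n) ⊆ Finset.Icc 1 (n / 6) := by
      intro i; simp only [Finset.mem_filter, Finset.mem_Ico, Finset.mem_Icc]; lia
    have := Finset.card_le_card hsub
    rw [Nat.card_Icc] at this
    rw [le_sub_iff_add_le]
    norm_cast
    lia
  have hsum := Finset.sum_le_sum hterm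
  rw [Finset.sum_sub_distrib, ← Finset.mul_sum, ← Finset.mul_sum, ← Finset.sum_filter,
    Finset.sum_const, nsmul_eq_mul] at hsum
  have := mul_le_mul_of_nonneg_right hcard
    (mul_nonneg (show 0 ≤ 3 * (n : ℝ) ^ 2 by positivity) (hnonneg 0 (by lia)))
  linarith

end Weights

namespace InvariantConvexOn

variable {n : ℕ} {F : ℝ × ℝ → ℝ}

lemma map_comm (hF : InvariantConvexOn n F) {a b : ℕ} (h : a + b ≤ n) :
    F (a, b) = F (b, a) :=
  (hF.map_sw (a, b) (cornerTriangle_subset_momentTriangle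
    ⟨a.cast_nonneg, b.cast_nonneg, by simpa using (Nat.cast_le (α := ℝ)).2 h⟩)).symm

lemma map_layer_comm (hF : InvariantConvexOn n F) {i j : ℕ} (hi : i ≤ j) (hj : j ≤ n) :
    F ((j : ℝ) - i, i) = F (i, (j : ℝ) - i) :=
  (hF.map_sw _ (cornerTriangle_subset_momentTriangle (layer_mem_cornerTriangle hi hj))).symm

lemma map_layer_min (hF : InvariantConvexOn n F) {i j : ℕ} (hi : i ≤ j) (hj : j ≤ n) :
    F ((j : ℝ) - (min i (j - i) : ℕ), (min i (j - i) : ℕ)) = F ((j : ℝ) - i, i) := by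
  rcases le_total i (j - i) with h | h
  · rw [min_eq_left h]
  · rw [min_eq_right h, hF.map_layer_comm hi hj, Nat.cast_sub hi, sub_sub_cancel]

lemma layerSum_eq (hF : InvariantConvexOn n F) (hn : 1 ≤ n) :
    layerSum F n = F (n, 0) + ∑ i ∈ Finset.Ico 1 n, foldWeight n i * F ((n : ℝ) - i, i) := by
  rw [← sum_Ico_min_sub fun i => F ((n : ℝ) - i, i), layerSum, Finset.range_eq_Ico,
    Finset.sum_eq_sum_Ico_succ_bot hn]
  congr 1
  · simp
  · exact Finset.sum_congr rfl fun i hi =>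
      (hF.map_layer_min (Finset.mem_Ico.1 hi).2.le le_rfl).symm

lemma mul_map_layer_le (hF : InvariantConvexOn n F) (h0 : F 0 = 0) {i j : ℕ} (hi : i ≤ j)
    (hj : j < n) :
    n * F ((j : ℝ) - i, i) ≤ j * F ((n : ℝ) - (min i (j - i) : ℕ), (min i (j - i) : ℕ)) := by
  have hmin : 2 * ((min i (j - i) : ℕ) : ℝ) ≤ j := by
    have : 2 * min i (j - i) ≤ j := by lia
    exact_mod_cast this
  have hj' : (j : ℝ) < n := Nat.cast_lt.2 hj
  have h := hF.mul_map_le h0 (x := (j : ℝ) - (min i (j - i) : ℕ)) (y := (min i (j - i) : ℕ))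
    (Nat.cast_nonneg _) (by linarith) (by linarith)
  rwa [hF.map_layer_min hi hj.le, sub_add_cancel] at h

lemma mul_layerSum_le (hF : InvariantConvexOn n F) (h0 : F 0 = 0) {j : ℕ} (hj : j < n) :
    n * layerSum F j ≤ j * F (n, 0) + j * ∑ i ∈ Finset.Ico 1 j,
      F ((n : ℝ) - (min i (j - i) : ℕ), (min i (j - i) : ℕ)) := by
  obtain rfl | hj0 := Nat.eq_zero_or_pos j
  · simp [layerSum]
  rw [layerSum, Finset.range_eq_Ico, Finset.sum_eq_sum_Ico_succ_bot hj0, mul_add, Finset.mul_sum,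
    Finset.mul_sum]
  refine add_le_add ?_ (Finset.sum_le_sum fun i hi => ?_)
  · simpa using hF.mul_map_layer_le h0 (Nat.zero_le j) hj
  · exact hF.mul_map_layer_le h0 (Finset.mem_Ico.1 hi).2.le hj

lemma mul_sum_layerSum_le_sum_layerWeight (hF : InvariantConvexOn n F) (h0 : F 0 = 0) :
    n * ∑ j ∈ Finset.range n, layerSum F j ≤ n * (n - 1) / 2 * F (n, 0) +
      ∑ i ∈ Finset.Ico 1 n, layerWeight n i * F ((n : ℝ) - i, i) := by
  rw [← sum_mul_sum_Ico_min_sub (fun i => F ((n : ℝ) - i, i)), ← sum_range_natCast, Finset.sum_mul,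
    ← Finset.sum_add_distrib, Finset.mul_sum]
  exact Finset.sum_le_sum fun j hj => hF.mul_layerSum_le h0 (Finset.mem_range.1 hj)

-- With `V` the area and `N` the number of lattice points, `18 * n + 12 = 4 * (3 * N - 3 * V)` and
-- `9 * n ^ 2 - 9 * n - 6 = 4 * (3 * V - 3 * N / 2)`: these are the coefficients of the inner layers
-- and of the outermost layer when the trapezoid bound for `N * ∫ F` is compared with `V * ∑ F`.
lemma mul_sum_layerSum_le (hF : InvariantConvexOn n F) (hn : 1 ≤ n) (h0 : F 0 = 0) :
    (18 * n + 12) * ∑ j ∈ Finset.range n, layerSum F j ≤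
      (9 * n ^ 2 - 9 * n - 6) * layerSum F n + 3 * n * (n + 1) * F (n, 0) := by
  have hn' : (0 : ℝ) < n := by exact_mod_cast hn
  have hmem {i : ℕ} (hi : i < n) : ((n : ℝ) - i, (i : ℝ)) ∈ momentTriangle n :=
    cornerTriangle_subset_momentTriangle (layer_mem_cornerTriangle hi.le le_rfl)
  have hinner := hF.mul_sum_layerSum_le_sum_layerWeight h0
  have hweights := sum_layerWeight_mul_le (h := fun i => F ((n : ℝ) - i, i)) hn
    (fun i hi => h0 ▸ hF.map_zero_le (hmem hi))
    (fun i hi => by simpa using hF.le_map_corner hn' (hmem hi))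
  have hlayer := hF.layerSum_eq hn
  simp only [CharP.cast_eq_zero, sub_zero] at hweights
  have hscaled := mul_le_mul_of_nonneg_left hinner (show 0 ≤ 18 * (n : ℝ) + 12 by positivity)
  refine le_of_mul_le_mul_left ?_ hn'
  rw [hlayer]
  linarith

/-- The surplus `F (n, 0) / 2` controls the case of equality, since `F (n, 0)` is the maximum
of `F`. -/
lemma ncard_mul_setIntegral_add_le (hF : InvariantConvexOn n F) (hn : 1 ≤ n) (h0 : F 0 = 0) :
    ((momentTriangle n ∩ lat).ncard : ℝ) * (∫ x in momentTriangle n, F x) + F (n, 0) / 2 ≤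
      volume.real (momentTriangle n) * ∑ᶠ x ∈ momentTriangle n ∩ lat, F x := by
  have hn' : (0 : ℝ) < n := by exact_mod_cast hn
  have hnonneg (x) (hx : x ∈ momentTriangle n) : 0 ≤ F x := h0 ▸ hF.map_zero_le hx
  have hsub := cornerTriangle_subset_momentTriangle (r := n)
  have htrap : ∫ x in cornerTriangle n, F x ≤ trapezoidSum F n / 6 :=
    setIntegral_le_trapezoidSum hn (hF.convexOn.subset hsub convex_cornerTriangle)
      ((hF.integrableOn hn').mono_set hsub) fun x hx => hnonneg x (hsub hx)
  rw [trapezoidSum_eq hn h0 fun a b => hF.map_comm] at htrap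
  have hint := hF.setIntegral_le hn' hnonneg
  have hlayers := hF.mul_sum_layerSum_le hn h0
  rw [finsum_mem_momentTriangle_inter_lat hF.map_σ₃, Finset.sum_range_succ, h0,
    ncard_momentTriangle_inter_lat, volume_momentTriangle hn'.le]
  nlinarith

end InvariantConvexOn

section Concave

variable {n : ℕ} {r : ℝ} {g : ℝ × ℝ → ℝ}

lemma invariantConvexOn_const_sub (hg : ConcaveOn ℝ (momentTriangle r) g)
    (hinv : ∀ x ∈ momentTriangle r, g (σ₃ x) = g x ∧ g (sw x) = g x) (c : ℝ) :
    InvariantConvexOn r fun x => c - g x where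
  convexOn := (convexOn_const c hg.1).sub hg
  map_σ₃ x hx := by rw [(hinv x hx).1]
  map_sw x hx := by rw [(hinv x hx).2]

lemma volume_mul_finsum_add_le (hn : 1 ≤ n) (hg : ConcaveOn ℝ (momentTriangle n) g)
    (hinv : ∀ x ∈ momentTriangle n, g (σ₃ x) = g x ∧ g (sw x) = g x) :
    volume.real (momentTriangle n) * (∑ᶠ x ∈ momentTriangle n ∩ lat, g x) +
      (g 0 - g (n, 0)) / 2 ≤
        ((momentTriangle n ∩ lat).ncard : ℝ) * ∫ x in momentTriangle n, g x := by
  have hn' : (0 : ℝ) < n := by exact_mod_cast hn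
  have hfin := finite_momentTriangle_inter_lat n
  have hconst : IntegrableOn (fun _ => g 0) (momentTriangle n) :=
    integrableOn_const (isCompact_momentTriangle hn').measure_ne_top
  have hint : IntegrableOn g (momentTriangle n) := by
    simpa using (invariantConvexOn_const_sub hg hinv 0).integrableOn hn' |>.neg
  have h := (invariantConvexOn_const_sub hg hinv (g 0)).ncard_mul_setIntegral_add_le hn
    (sub_self _)
  rw [integral_sub hconst hint, setIntegral_const, finsum_mem_sub_distrib _ _ hfin,
    finsum_mem_const_eq_ncard_nsmul hfin, smul_eq_mul, nsmul_eq_mul] at h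
  linarith

lemma IsAffineOn.map_eq_map_zero (hg : IsAffineOn (momentTriangle r) g)
    (hinv : ∀ x ∈ momentTriangle r, g (σ₃ x) = g x) {x : ℝ × ℝ} (hx : x ∈ momentTriangle r) :
    g x = g 0 := by
  have hzero : 0 ∈ momentTriangle r :=
    zero_mem_momentTriangle (by obtain ⟨h1, h2, h3⟩ := hx; linarith)
  obtain ⟨l, c, hl⟩ := hg
  have hsum : l x + l (σ₃ x) + l (σ₃^[2] x) = 0 := by
    rw [← map_add, ← map_add, add_σ₃_add_iterate_two_σ₃, map_zero]
  have h1 := hinv x hx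
  have h2 := map_iterate_σ₃_of_map_σ₃ hinv hx 2
  rw [hl _ (σ₃_mem_momentTriangle hx), hl x hx] at h1
  rw [hl _ (iterate_σ₃_mem_momentTriangle 2 hx), hl x hx] at h2
  rw [hl x hx, hl 0 hzero, map_zero]
  linarith

lemma volume_mul_finsum_eq_iff (hn : 1 ≤ n) (hg : ConcaveOn ℝ (momentTriangle n) g)
    (hinv : ∀ x ∈ momentTriangle n, g (σ₃ x) = g x ∧ g (sw x) = g x) :
    volume.real (momentTriangle n) * (∑ᶠ x ∈ momentTriangle n ∩ lat, g x) =
        ((momentTriangle n ∩ lat).ncard : ℝ) * (∫ x in momentTriangle n, g x) ↔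
      IsAffineOn (momentTriangle n) g := by
  have hn' : (0 : ℝ) < n := by exact_mod_cast hn
  have hF := invariantConvexOn_const_sub hg hinv (g 0)
  constructor
  · intro heq
    have hsurplus := volume_mul_finsum_add_le hn hg hinv
    refine ⟨0, g 0, fun x hx => ?_⟩
    have hlower := hF.map_zero_le hx
    have hupper := hF.le_map_corner hn' hx
    rw [LinearMap.zero_apply]
    linarith
  · intro haff
    have hconst (x) (hx : x ∈ momentTriangle n) : g x = g 0 :=
      haff.map_eq_map_zero (fun x hx => (hinv x hx).1) hx
    rw [setIntegral_congr_fun (isCompact_momentTriangle hn').measurableSet hconst,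
      finsum_mem_congr rfl fun x hx => hconst x hx.1, setIntegral_const,
      finsum_mem_const_eq_ncard_nsmul (finite_momentTriangle_inter_lat n), smul_eq_mul,
      nsmul_eq_mul]
    ring

end Concave

theorem chow_polystable_X3_general (n : ℕ) (hn : 1 ≤ n) (g : ℝ × ℝ → ℝ)
    (hg : ConcaveOn ℝ (momentTriangle n) g)
    (hinv : ∀ x ∈ momentTriangle n, g (σ₃ x) = g x ∧ g (sw x) = g x) :
    ((volume (momentTriangle n)).toReal⁻¹ * (∫ x in momentTriangle n, g x) ≥
        ((momentTriangle n ∩ lat).ncard : ℝ)⁻¹ * ∑ᶠ x ∈ momentTriangle n ∩ lat, g x) ∧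
      ((volume (momentTriangle n)).toReal⁻¹ * (∫ x in momentTriangle n, g x) =
          ((momentTriangle n ∩ lat).ncard : ℝ)⁻¹ * (∑ᶠ x ∈ momentTriangle n ∩ lat, g x) ↔
        IsAffineOn (momentTriangle n) g) := by
  have hn' : (0 : ℝ) < n := by exact_mod_cast hn
  have hV : 0 < volume.real (momentTriangle n) := by
    rw [volume_momentTriangle hn'.le]
    positivity
  have hN : 0 < ((momentTriangle n ∩ lat).ncard : ℝ) := by
    rw [ncard_momentTriangle_inter_lat]
    positivity
  have hcorner : g (n, 0) ≤ g 0 := by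
    have hmem : ((n : ℝ), (0 : ℝ)) ∈ momentTriangle n :=
      cornerTriangle_subset_momentTriangle ⟨hn'.le, le_rfl, (add_zero _).le⟩
    have := (invariantConvexOn_const_sub hg hinv (g 0)).map_zero_le hmem
    linarith
  have hle := volume_mul_finsum_add_le hn hg hinv
  rw [← measureReal_def, ← volume_mul_finsum_eq_iff hn hg hinv, inv_mul_eq_div, inv_mul_eq_div,
    ge_iff_le, div_le_div_iff₀ hN hV, div_eq_div_iff hV.ne' hN.ne']
  exact ⟨by linarith, by grind⟩

/-- Ono's criterion for `X₃`: for every `W₃`-invariant `g ∈ PL(Δ₃;k)`, the average of `g`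
over `kΔ₃` is at least the average of `g` over the lattice points of `kΔ₃`, with equality
iff `g` is affine. -/
theorem chow_polystable_X3 (k : ℕ) (hk : 1 ≤ k) (g : ℝ × ℝ → ℝ)
    (hPL : IsPL ((k : ℝ) • Δ₃) g)
    (hinv : ∀ x ∈ (k : ℝ) • Δ₃, g (σ₃ x) = g x ∧ g (sw x) = g x) :
    ((volume ((k : ℝ) • Δ₃)).toReal⁻¹ * (∫ x in (k : ℝ) • Δ₃, g x) ≥
        ((((k : ℝ) • Δ₃) ∩ lat).ncard : ℝ)⁻¹ * ∑ᶠ x ∈ ((k : ℝ) • Δ₃) ∩ lat, g x) ∧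
      ((volume ((k : ℝ) • Δ₃)).toReal⁻¹ * (∫ x in (k : ℝ) • Δ₃, g x) =
          ((((k : ℝ) • Δ₃) ∩ lat).ncard : ℝ)⁻¹ * (∑ᶠ x ∈ ((k : ℝ) • Δ₃) ∩ lat, g x) ↔
        IsAffineOn ((k : ℝ) • Δ₃) g) := by
  have hΔ : (k : ℝ) • Δ₃ = momentTriangle (3 * k : ℕ) := by
    rw [smul_Δ₃ (by exact_mod_cast hk), Nat.cast_mul, Nat.cast_ofNat]
  rw [hΔ] at hPL hinv ⊢
  have hn : 1 ≤ 3 * k := by lia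
  exact chow_polystable_X3_general (3 * k) hn g (hPL.concaveOn convex_momentTriangle
    (finite_momentTriangle_inter_lat _) (momentTriangle_subset_convexHull_inter_lat hn)) hinv
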